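/- arXiv:1006.4120 — 2 statements merged into one kernel-verified Lean document; each statement's English description precedes it below -/
import Mathlib

section
/- Under the Fock-vacuum assumptions, for all integers m ≥ 1 and 0 ≤ n ≤ p: if m is even then b⁻·|m,n,α⟩ = (-1)ⁿ m |m-1,n,α⟩ + 2(-1)^(n+1) n m |m-1,n,β⟩, and if m is odd then b⁻·|m,n,α⟩ = (-1)^(n+1)(2n - m - (p-1)) |m-1,n,α⟩ + 2(-1)^(n+1) n (m-1) |m-1,n,β⟩. -/
noncomputable section

/-- The commutator `[x, y] = x*y - y*x`. -/
def pbComm {A : Type*} [Ring A] (x y : A) : A := x * y - y * x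

/-- The anticommutator `{x, y} = x*y + y*x`. -/
def pbAcomm {A : Type*} [Ring A] (x y : A) : A := x * y + y * x

/-- The defining trilinear relations of the Relative Parabose Set algebra
`P_BF^(1,1)` on generators `bp = b⁺`, `bm = b⁻`, `fp = f⁺`, `fm = f⁻`. -/
def PBFRels {A : Type*} [Ring A] (bp bm fp fm : A) : Prop :=
  pbComm (pbAcomm bp bp) fm = 0 ∧
  pbComm (pbComm fp fm) bm = 0 ∧
  pbComm (pbAcomm bp bp) fp = 0 ∧
  pbComm (pbAcomm bm bm) fp = 0 ∧
  pbComm (pbAcomm bm bm) fm = 0 ∧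
  pbComm (pbAcomm bp bm) fm = 0 ∧
  pbComm (pbAcomm fm bm) bm = 0 ∧
  pbComm (pbAcomm fm bp) bp = 0 ∧
  pbComm (pbAcomm fm bp) bm = -(2 * fm) ∧
  pbAcomm (pbAcomm bm fp) fm = 2 * bm ∧
  pbComm (pbAcomm fp bp) bp = 0 ∧
  pbComm (pbAcomm fp bm) bm = 0 ∧
  pbComm (pbAcomm bm fm) bp = 2 * fm ∧
  pbAcomm (pbAcomm fm bm) fp = 2 * bm ∧
  pbAcomm (pbAcomm bm fm) fm = 0 ∧
  pbAcomm (pbAcomm bm fp) fp = 0 ∧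
  pbComm (pbAcomm bm bp) fp = 0 ∧
  pbComm (pbComm fm fp) bp = 0 ∧
  pbAcomm (pbAcomm bp fp) fp = 0 ∧
  pbAcomm (pbAcomm bp fm) fm = 0 ∧
  pbComm (pbAcomm fp bm) bp = 2 * fp ∧
  pbComm (pbAcomm bp fp) bm = -(2 * fp) ∧
  pbAcomm (pbAcomm bp fm) fp = 2 * bp ∧
  pbAcomm (pbAcomm fp bp) fm = 2 * bp ∧
  pbComm bm (pbAcomm bp bm) = 2 * bm ∧
  pbComm bp (pbAcomm bp bp) = 0 ∧
  pbComm bp (pbAcomm bm bm) = -(4 * bm) ∧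
  pbComm fm (pbComm fp fm) = 2 * fm ∧
  pbComm bm (pbAcomm bm bm) = 0 ∧
  pbComm bm (pbAcomm bp bp) = 4 * bp ∧
  pbComm bp (pbAcomm bm bp) = -(2 * bp) ∧
  pbComm fp (pbComm fm fp) = 2 * fp

/-- `R⁺ = (1/2)(b⁺f⁺ + f⁺b⁺)` as a linear operator. -/
def Rplus {V : Type*} [AddCommGroup V] [Module ℂ V] (bp fp : Module.End ℂ V) :
    Module.End ℂ V := (2 : ℂ)⁻¹ • (bp * fp + fp * bp)

/-- The vector `|m, n, α⟩ = (f⁺)ⁿ (b⁺)ᵐ |0⟩`. -/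
def vA {V : Type*} [AddCommGroup V] [Module ℂ V] (bp fp : Module.End ℂ V)
    (vac : V) (m n : ℕ) : V := (fp ^ n * bp ^ m) vac

/-- The vector `|m, n, β⟩ = (f⁺)^(n-1) (b⁺)^(m-1) R⁺ |0⟩`, set to `0` when
`m = 0` or `n = 0`. -/
def vB {V : Type*} [AddCommGroup V] [Module ℂ V] (bp fp : Module.End ℂ V)
    (vac : V) (m n : ℕ) : V :=
  if m = 0 ∨ n = 0 then 0 else (fp ^ (n - 1) * bp ^ (m - 1) * Rplus bp fp) vac

theorem aux_fpow {V : Type*} [AddCommGroup V] [Module ℂ V] (bm fp Q : Module.End ℂ V)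
    (h1 : ∀ v, bm (fp v) = - fp (bm v) + Q v) (h2 : ∀ v, Q (fp v) = - fp (Q v)) (n : ℕ) :
    ∀ v, bm ((fp ^ n) v) = ((-1 : ℂ) ^ n) • (fp ^ n) (bm v)
      + ((-1 : ℂ) ^ (n + 1) * (n : ℂ)) • (fp ^ (n - 1)) (Q v) := by
  induction n with
  | zero => intro v; simp
  | succ n ih =>
    intro v
    rw [pow_succ, Module.End.mul_apply, ih, h1, h2]
    rcases n with _ | n
    · simp
    · simp only [Nat.add_sub_cancel, map_add, map_neg, pow_succ, Module.End.mul_apply]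
      push_cast
      module

theorem aux_bpow {V : Type*} [AddCommGroup V] [Module ℂ V] (b X S : Module.End ℂ V)
    (h1 : ∀ v, X (b (b v)) = b (b (X v)) + (2 : ℂ) • S v)
    (h2 : ∀ v, S (b (b v)) = b (b (S v))) (k : ℕ) :
    ∀ v, X ((b ^ (2 * (k + 1))) v) = (b ^ (2 * (k + 1))) (X v)
      + (2 * ((k : ℂ) + 1)) • (b ^ (2 * k)) (S v) := by
  induction k with
  | zero => intro v; simp [pow_succ, h1]
  | succ k ih =>
    intro v
    have e : ∀ (j : ℕ) (w : V), (b ^ (2 * (j + 1))) w = (b ^ (2 * j)) (b (b w)) := by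
      intro j w
      rw [show 2 * (j + 1) = 2 * j + 1 + 1 by ring, pow_succ, pow_succ]
      rfl
    rw [e (k + 1) v, ih, h1, h2, map_add, map_smul, e (k + 1) (X v), e k (S v)]
    push_cast
    module

theorem bm_action_alpha {V : Type*} [AddCommGroup V] [Module ℂ V]
    (p : ℕ) (hp : 0 < p)
    (bp bm fp fm : Module.End ℂ V) (hrel : PBFRels bp bm fp fm)
    (vac : V) (hb0 : bm vac = 0) (hf0 : fm vac = 0)
    (hbb : bm (bp vac) = (p : ℂ) • vac) (hff : fm (fp vac) = (p : ℂ) • vac)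
    (hbf : bm (fp vac) = 0) (hfb : fm (bp vac) = 0)
    (m n : ℕ) (hm : 1 ≤ m) (hn : n ≤ p) :
    (Even m → bm (vA bp fp vac m n)
      = ((-1 : ℂ) ^ n * (m : ℂ)) • vA bp fp vac (m - 1) n
        + (2 * (-1 : ℂ) ^ (n + 1) * (n : ℂ) * (m : ℂ)) • vB bp fp vac (m - 1) n) ∧
    (Odd m → bm (vA bp fp vac m n)
      = ((-1 : ℂ) ^ (n + 1) * (2 * (n : ℂ) - (m : ℂ) - ((p : ℂ) - 1))) • vA bp fp vac (m - 1) n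
        + (2 * (-1 : ℂ) ^ (n + 1) * (n : ℂ) * ((m : ℂ) - 1)) • vB bp fp vac (m - 1) n) := by
  obtain ⟨-, -, r1, -, -, -, -, -, -, -, r2, -, -, -, -, r3, -, -, -, -, r4, -, -, -, -, -, -, -, -,
    r5, -, -⟩ := hrel
  have two : (2 : Module.End ℂ V) = (2 : ℂ) • 1 := by
    rw [two_smul]; norm_num
  have four : (4 : Module.End ℂ V) = (4 : ℂ) • 1 := by
    rw [show (4 : ℂ) = 2 + 2 by norm_num, add_smul, two_smul]; norm_num
  have canc : ∀ x y : V, (2 : ℂ) • x = (2 : ℂ) • y → x = y := by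
    intro x y h
    exact smul_right_injective V (two_ne_zero (α := ℂ)) h
  -- vector forms of the relations
  have hfbb : ∀ v, fp (bp (bp v)) = bp (bp (fp v)) := by
    intro v
    have h := congrArg (fun T : Module.End ℂ V => T v) r1
    simp only [pbComm, pbAcomm, LinearMap.sub_apply, LinearMap.add_apply, Module.End.mul_apply,
      LinearMap.zero_apply, map_add] at h
    apply canc
    rw [two_smul, two_smul]
    exact (sub_eq_zero.mp h).symm
  have hSb : ∀ v, fp (bp (bp v)) + bp (fp (bp v)) = bp (fp (bp v)) + bp (bp (fp v)) := by
    intro v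
    rw [hfbb, add_comm]
  have hbbb : ∀ v, bm (bp (bp v)) = bp (bp (bm v)) + (2 : ℂ) • bp v := by
    intro v
    have h := congrArg (fun T : Module.End ℂ V => T v) r5
    rw [four] at h
    simp only [pbComm, pbAcomm, LinearMap.sub_apply, LinearMap.add_apply, Module.End.mul_apply,
      map_add, LinearMap.smul_apply, Module.End.one_apply] at h
    apply canc
    linear_combination (norm := module) h
  let Q : Module.End ℂ V := bm * fp + fp * bm
  have hQ : ∀ v, Q v = bm (fp v) + fp (bm v) := fun v => rfl
  let S : Module.End ℂ V := bp * fp + fp * bp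
  have hS : ∀ v, S v = bp (fp v) + fp (bp v) := fun v => rfl
  have hQf : ∀ v, Q (fp v) = - fp (Q v) := by
    intro v
    have h := congrArg (fun T : Module.End ℂ V => T v) r3
    exact eq_neg_of_add_eq_zero_left h
  have hQb : ∀ v, Q (bp v) = bp (Q v) + (2 : ℂ) • fp v := by
    intro v
    have h := congrArg (fun T : Module.End ℂ V => T v) r4
    rw [two] at h
    simp only [pbComm, pbAcomm, LinearMap.sub_apply, LinearMap.add_apply, Module.End.mul_apply,
      map_add, LinearMap.smul_apply, Module.End.one_apply] at h
    simp only [hQ, map_add]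
    linear_combination (norm := module) h
  have hbmf : ∀ v, bm (fp v) = - fp (bm v) + Q v := by
    intro v
    rw [hQ]; abel
  have hSbb : ∀ v, S (bp (bp v)) = bp (bp (S v)) := by
    intro v
    simp only [hS, map_add, hfbb]
  have hSb1 : ∀ v, S (bp v) = bp (S v) := by
    intro v
    simp only [hS, map_add, hfbb]
    abel
  have hQbb : ∀ v, Q (bp (bp v)) = bp (bp (Q v)) + (2 : ℂ) • S v := by
    intro v
    simp only [hQb, hS, map_add, map_smul]
    module
  have hQ0 : Q vac = 0 := by simp [hQ, hb0, hbf]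
  have F := aux_fpow bm fp Q hbmf hQf
  have B1 := aux_bpow bp bm bp hbbb (fun v => rfl)
  have B2 := aux_bpow bp Q S hQbb hSbb
  have hfpow : ∀ (k : ℕ) (v : V), (bp ^ (2 * k)) (fp v) = fp ((bp ^ (2 * k)) v) := by
    intro k
    induction k with
    | zero => intro v; simp
    | succ k ih =>
      intro v
      rw [show 2 * (k + 1) = 2 * k + 1 + 1 by ring, pow_succ, pow_succ]
      simp only [Module.End.mul_apply]
      rw [← hfbb, ih]
  have hR : Rplus bp fp vac = (2 : ℂ)⁻¹ • S vac := rfl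
  constructor
  · rintro ⟨k, hk⟩
    obtain ⟨k, rfl⟩ : ∃ j, k = j + 1 := ⟨k - 1, by omega⟩
    obtain rfl : m = 2 * (k + 1) := by omega
    rw [show 2 * (k + 1) - 1 = 2 * k + 1 by omega]
    simp only [vA, vB, Module.End.mul_apply, F, B1, B2, hb0, hQ0, map_zero, zero_add, hR, map_smul]
    rw [pow_succ bp (2 * k), Module.End.mul_apply]
    rcases n with _ | n
    · simp
    · simp
      module
  · rintro ⟨k, rfl⟩
    rw [show 2 * k + 1 - 1 = 2 * k by omega]
    simp only [vA, vB, Module.End.mul_apply, pow_succ bp (2 * k), F, hR, map_smul]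
    rcases k with _ | k
    · rcases n with _ | n
      · simp [hbb]
      · simp [hbb, hQb, hQ0, pow_succ fp n]
        module
    · rw [B1, B2, hSb1, hbb, hQb, hQ0, map_zero, zero_add]
      simp only [map_add, map_smul, hfpow]
      have e1 : (bp ^ (2 * k)) (bp (bp vac)) = (bp ^ (2 * (k + 1))) vac := by
        rw [show 2 * (k + 1) = 2 * k + 1 + 1 by ring, pow_succ, pow_succ]; rfl
      have e2 : (bp ^ (2 * k)) (bp (S vac)) = (bp ^ (2 * (k + 1) - 1)) (S vac) := by
        rw [show 2 * (k + 1) - 1 = 2 * k + 1 by omega, pow_succ]; rfl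
      rw [e1, e2]
      rcases n with _ | n
      · simp
        module
      · simp [pow_succ fp n]
        module
end
end

section
/- Under the Fock-vacuum assumptions, for all integers m ≥ 1 and 1 ≤ n ≤ p: b⁺·|m,n,β⟩ = (-1)^(n-1) |m+1,n,β⟩. -/
noncomputable section

theorem aux_sq {V : Type*} [AddCommGroup V] [Module ℂ V] (b f S : Module.End ℂ V)
    (hS : S = b * f + f * b)
    (h1 : S * b = b * S) (h2 : S * f = -(f * S)) : S * S = 0 := by
  have h : S * S = -(S * S) := by
    calc S * S = S * (b * f + f * b) := by rw [← hS]
      _ = (S * b) * f + (S * f) * b := by noncomm_ring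
      _ = b * (S * f) - f * (S * b) := by
        rw [h1, h2, mul_assoc b S f, h2, neg_mul, mul_assoc f S b, h1]; noncomm_ring
      _ = -((b * f + f * b) * S) := by rw [h1, h2]; noncomm_ring
      _ = -(S * S) := by rw [← hS]
  have h4 : (2 : ℂ) • (S * S) = 0 := by
    rw [two_smul]
    exact eq_neg_iff_add_eq_zero.mp h
  exact (smul_eq_zero.mp h4).resolve_left two_ne_zero

theorem aux_pow {A : Type*} [Ring A] (b f S : A) (hS : S = b * f + f * b)
    (h1 : S * b = b * S) (h2 : S * f = -(f * S)) (h3 : S * S = 0) (j k : ℕ) :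
    b * (f ^ k * (b ^ j * S)) = (-1) ^ k * (f ^ k * (b ^ (j + 1) * S)) := by
  have hSf : ∀ k : ℕ, S * (f ^ k * (b ^ j * S)) = 0 := by
    intro k
    induction k with
    | zero =>
      have : Commute S (b ^ j) := Commute.pow_right h1 j
      rw [pow_zero, one_mul, ← mul_assoc, this.eq, mul_assoc, h3, mul_zero]
    | succ k ih =>
      rw [pow_succ', mul_assoc, ← mul_assoc, h2, neg_mul, mul_assoc, ih, mul_zero, neg_zero]
  induction k with
  | zero => simp [pow_succ', mul_assoc]
  | succ k ih =>
    have hbf : b * f = S - f * b := by rw [hS]; abel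
    rw [pow_succ' f, mul_assoc, ← mul_assoc b, hbf, sub_mul, hSf, mul_assoc f b, ih,
      pow_succ' (-1 : A)]
    have hc : f * (-1) ^ k = (-1) ^ k * f := ((Commute.neg_one_right f).pow_right k).eq
    rw [← mul_assoc f, hc]
    noncomm_ring

theorem bp_action_beta {V : Type*} [AddCommGroup V] [Module ℂ V]
    (p : ℕ) (hp : 0 < p)
    (bp bm fp fm : Module.End ℂ V) (hrel : PBFRels bp bm fp fm)
    (vac : V) (hb0 : bm vac = 0) (hf0 : fm vac = 0)
    (hbb : bm (bp vac) = (p : ℂ) • vac) (hff : fm (fp vac) = (p : ℂ) • vac)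
    (hbf : bm (fp vac) = 0) (hfb : fm (bp vac) = 0)
    (m n : ℕ) (hm : 1 ≤ m) (hn1 : 1 ≤ n) (hn : n ≤ p) :
    bp (vB bp fp vac m n) = ((-1 : ℂ) ^ (n - 1)) • vB bp fp vac (m + 1) n := by
  have h1 : pbComm (pbAcomm fp bp) bp = 0 := by
    unfold PBFRels at hrel; tauto
  have h2 : pbAcomm (pbAcomm bp fp) fp = 0 := by
    unfold PBFRels at hrel; tauto
  obtain ⟨S, hS⟩ : ∃ S, S = bp * fp + fp * bp := ⟨_, rfl⟩
  have e1 : S * bp = bp * S := by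
    unfold pbComm pbAcomm at h1
    rw [add_comm, ← hS] at h1
    exact sub_eq_zero.mp h1
  have e2 : S * fp = -(fp * S) := by
    unfold pbAcomm at h2
    rw [← hS] at h2
    exact eq_neg_of_add_eq_zero_left h2
  have e3 := aux_sq bp fp S hS e1 e2
  obtain ⟨j, rfl⟩ := Nat.exists_eq_add_of_le' hm
  obtain ⟨k, rfl⟩ := Nat.exists_eq_add_of_le' hn1
  have key := aux_pow bp fp S hS e1 e2 e3 j k
  have hc : ((-1 : Module.End ℂ V)) ^ k = ((-1 : ℂ) ^ k) • 1 := by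
    rcases neg_one_pow_eq_or ℂ k with h | h
    all_goals
      rcases Nat.even_or_odd k with hk | hk <;> simp [hk.neg_one_pow]
  have key2 := congrArg (fun T : Module.End ℂ V => (2 : ℂ)⁻¹ • T vac) key
  rw [hc] at key2
  simp only [vB, Rplus, ← hS]
  simp only [Module.End.mul_apply, LinearMap.smul_apply, Module.End.one_apply] at key2
  simp [smul_comm ((-1 : ℂ) ^ k)] at key2 ⊢
  exact key2
end
end
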